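/- Let J be a nilpotent Jordan superalgebra over ℂ of type (3,2). Then J is isomorphic, via a grading-preserving algebra isomorphism, to exactly one of the following 29 superalgebras, each given on a homogeneous basis {e₁, e₂, e₃; f₁, f₂} (e_i even, f_j odd): (1) all products zero; (2) f₁f₂=e₂; (3) e₁f₂=f₁; (4) e₁f₂=f₁, f₁f₂=e₂; (5) e₁²=e₂; (6) e₁²=e₂, f₁f₂=e₁; (7) e₁²=e₂, f₁f₂=e₂; (8) e₁²=e₂, f₁f₂=e₃; (9) e₁²=e₂, e₂f₂=f₁; (10) e₁²=e₂, e₃f₂=f₁; (11) e₁²=e₂, e₃f₂=f₁, f₁f₂=e₂; (12) e₁²=e₂, e₁f₂=f₁; (13) e₁²=e₂, e₁f₂=f₁, f₁f₂=e₂; (14) e₁²=e₂, e₁f₂=f₁, f₁f₂=e₃; (15) e₁e₂=e₃; (16) e₁e₂=e₃, f₁f₂=e₁; (17) e₁e₂=e₃, f₁f₂=e₃; (18) e₁e₂=e₃, f₁f₂=e₁+e₂; (19) e₁e₂=e₃, e₃f₂=f₁; (20) e₁e₂=e₃, e₁f₂=f₁; (21) e₁e₂=e₃, e₁f₂=f₁,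 f₁f₂=e₃; (22) e₁e₂=e₃, e₁f₂=e₂f₂=f₁; (23) e₁e₂=e₃, e₁f₂=e₂f₂=f₁, f₁f₂=e₃; (24) e₁²=e₂, e₁e₂=e₃; (25) e₁²=e₂, e₁e₂=e₃, f₁f₂=e₂; (26) e₁²=e₂, e₁e₂=e₃, f₁f₂=e₃; (27) e₁²=e₂, e₁e₂=e₃, e₂f₂=f₁; (28) e₁²=e₂, e₁e₂=e₃, e₁f₂=f₁; (29) e₁²=e₂, e₁e₂=e₃, e₁f₂=f₁, f₁f₂=e₃. In particular these 29 superalgebras are pairwise non-isomorphic. -/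

import Mathlib

noncomputable section

/-- The underlying ℤ/2-graded vector space of type `(m,n)`: even part `Fin m → ℂ`,
odd part `Fin n → ℂ`. -/
abbrev GV (m n : ℕ) : Type := (Fin m → ℂ) × (Fin n → ℂ)

/-- A superalgebra structure tensor of type `(m,n)`: structure constants
`c i j k` (even·even), `ρ i j k` (even·odd) and `Γ i j k` (odd·odd). -/
abbrev Tensor (m n : ℕ) : Type :=
  (Fin m → Fin m → Fin m → ℂ) × (Fin m → Fin n → Fin n → ℂ) × (Fin n → Fin n → Fin m → ℂ)

/-- The ℤ/2-graded multiplication on `GV m n` determined by a structure tensor. -/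
def mulOf {m n : ℕ} (μ : Tensor m n) (x y : GV m n) : GV m n :=
  (fun k => (∑ i, ∑ j, x.1 i * y.1 j * μ.1 i j k) + ∑ i, ∑ j, x.2 i * y.2 j * μ.2.2 i j k,
   fun k => (∑ i, ∑ j, x.1 i * y.2 j * μ.2.1 i j k) + ∑ i, ∑ j, y.1 i * x.2 j * μ.2.1 i j k)

/-- `x` is homogeneous of parity `p` (`p = 0`: even, `p = 1`: odd). -/
def IsHom {m n : ℕ} (p : ℕ) (x : GV m n) : Prop :=
  (p = 0 ∧ x.2 = 0) ∨ (p = 1 ∧ x.1 = 0)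

/-- The sign `(-1)^k`. -/
def sgn (k : ℕ) : ℂ := (-1 : ℂ) ^ k

/-- The super-Jordan expression `J^s(w; x, y, z)` for homogeneous elements of
parities `pw, px, py, pz`. -/
def superJ {m n : ℕ} (μ : Tensor m n) (pw px py pz : ℕ) (w x y z : GV m n) : GV m n :=
  mulOf μ (mulOf μ w x) (mulOf μ y z)
    + sgn (px * py) • mulOf μ (mulOf μ w y) (mulOf μ x z)
    + sgn ((px + py) * pz) • mulOf μ (mulOf μ w z) (mulOf μ x y)
    - sgn (pw * px) • mulOf μ x (mulOf μ w (mulOf μ y z))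
    - sgn (py * (pw + px)) • mulOf μ y (mulOf μ w (mulOf μ x z))
    - sgn (pz * (pw + px + py)) • mulOf μ z (mulOf μ w (mulOf μ x y))

/-- `μ` is a Jordan superalgebra structure: supercommutativity and the Jordan
superidentity hold for all homogeneous elements. -/
def IsJordanSuper {m n : ℕ} (μ : Tensor m n) : Prop :=
  (∀ (px py : ℕ) (x y : GV m n), IsHom px x → IsHom py y →
      mulOf μ x y = sgn (px * py) • mulOf μ y x) ∧
  (∀ (pw px py pz : ℕ) (w x y z : GV m n),
      IsHom pw w → IsHom px x → IsHom py y → IsHom pz z →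
      superJ μ pw px py pz w x y z = 0)

/-- The product of two graded subspaces: the span of all products. -/
def mulSub {m n : ℕ} (μ : Tensor m n) (A B : Submodule ℂ (GV m n)) : Submodule ℂ (GV m n) :=
  Submodule.span ℂ {z | ∃ a ∈ A, ∃ b ∈ B, z = mulOf μ a b}

/-- The powers `J^k`: `J^1 = J` and `J^{k+1} = Σ_{i=1}^{k} J^i · J^{k+1-i}`. -/
def powT {m n : ℕ} (μ : Tensor m n) : ℕ → Submodule ℂ (GV m n)
  | 0 => ⊤
  | 1 => ⊤
  | (k + 2) => ⨆ i : Fin (k + 1), mulSub μ (powT μ ((i : ℕ) + 1)) (powT μ (k + 1 - (i : ℕ)))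
  decreasing_by
  · have := i.isLt; omega
  · omega

/-- `μ` is nilpotent: some power vanishes. -/
def IsNilpotentT {m n : ℕ} (μ : Tensor m n) : Prop :=
  ∃ k : ℕ, 1 ≤ k ∧ powT μ k = ⊥

/-- A grading-preserving algebra isomorphism between the superalgebras determined
by `μ` and `μ'`. -/
def Iso {m n : ℕ} (μ μ' : Tensor m n) : Prop :=
  ∃ (T : (Fin m → ℂ) ≃ₗ[ℂ] (Fin m → ℂ)) (S : (Fin n → ℂ) ≃ₗ[ℂ] (Fin n → ℂ)),
    ∀ x y : GV m n,
      (T ((mulOf μ x y).1), S ((mulOf μ x y).2)) = mulOf μ' (T x.1, S x.2) (T y.1, S y.2)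

/-- `μ` degenerates to `μ'`: `μ'` lies in the closure of the orbit of `μ` under
base change (in the standard topology). -/
def degenerates {m n : ℕ} (μ μ' : Tensor m n) : Prop :=
  μ' ∈ closure {ν : Tensor m n | Iso μ ν}

/-- Standard even basis vector `e_i`. -/
def eps {m n : ℕ} (i : Fin m) : GV m n := (Pi.single i 1, 0)

/-- Standard odd basis vector `f_j`. -/
def ph {m n : ℕ} (j : Fin n) : GV m n := (0, Pi.single j 1)


/-- A tensor of type (3,2) with products `e₁² = a·e₂`, `e₁e₂ = e₂e₁ = b·e₃`,
`e_i f₂ = δ_i f₁` and `f₁f₂ = Σ_k ω_k e_k`. -/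
def T32 (a b : ℂ) (δ ω : Fin 3 → ℂ) : Tensor 3 2 :=
  (fun i j k =>
      (if i = 0 ∧ j = 0 ∧ k = 1 then a else 0) +
      (if ((i = 0 ∧ j = 1) ∨ (i = 1 ∧ j = 0)) ∧ k = 2 then b else 0),
   fun i j k => if j = 1 ∧ k = 0 then δ i else 0,
   fun i j k => if i = 0 ∧ j = 1 then ω k else if i = 1 ∧ j = 0 then -ω k else 0)

/-- The 29 nilpotent Jordan superalgebras of type (3,2) from Table 4. -/
def A32 : Fin 29 → Tensor 3 2 :=
  ![ T32 0 0 0 0,                    -- (3,2)₁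
     T32 0 0 0 ![0,1,0],             -- (3,2)₂
     T32 0 0 ![1,0,0] 0,             -- (3,2)₃
     T32 0 0 ![1,0,0] ![0,1,0],      -- (3,2)₄
     T32 1 0 0 0,                    -- (3,2)₅
     T32 1 0 0 ![1,0,0],             -- (3,2)₆
     T32 1 0 0 ![0,1,0],             -- (3,2)₇
     T32 1 0 0 ![0,0,1],             -- (3,2)₈
     T32 1 0 ![0,1,0] 0,             -- (3,2)₉
     T32 1 0 ![0,0,1] 0,             -- (3,2)₁₀
     T32 1 0 ![0,0,1] ![0,1,0],      -- (3,2)₁₁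
     T32 1 0 ![1,0,0] 0,             -- (3,2)₁₂
     T32 1 0 ![1,0,0] ![0,1,0],      -- (3,2)₁₃
     T32 1 0 ![1,0,0] ![0,0,1],      -- (3,2)₁₄
     T32 0 1 0 0,                    -- (3,2)₁₅
     T32 0 1 0 ![1,0,0],             -- (3,2)₁₆
     T32 0 1 0 ![0,0,1],             -- (3,2)₁₇
     T32 0 1 0 ![1,1,0],             -- (3,2)₁₈
     T32 0 1 ![0,0,1] 0,             -- (3,2)₁₉
     T32 0 1 ![1,0,0] 0,             -- (3,2)₂₀
     T32 0 1 ![1,0,0] ![0,0,1],      -- (3,2)₂₁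
     T32 0 1 ![1,1,0] 0,             -- (3,2)₂₂
     T32 0 1 ![1,1,0] ![0,0,1],      -- (3,2)₂₃
     T32 1 1 0 0,                    -- (3,2)₂₄
     T32 1 1 0 ![0,1,0],             -- (3,2)₂₅
     T32 1 1 0 ![0,0,1],             -- (3,2)₂₆
     T32 1 1 ![0,1,0] 0,             -- (3,2)₂₇
     T32 1 1 ![1,0,0] 0,             -- (3,2)₂₈
     T32 1 1 ![1,0,0] ![0,0,1] ]     -- (3,2)₂₉

/-!
Nilpotency gives bases in which every `L_x` is strictly triangular on `J₀` and on `J₁`; by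
supercommutativity only `e₁² = p e₂ + q e₃`, `e₁e₂ = r e₃`, `e₂² = s e₃`, `eᵢf₂ = δᵢf₁` and
`f₁f₂ = ω` survive. The Jordan identity forces `p²s = 0`, and the classification of binary
quadratic forms then brings the even part to `e₁² = a e₂`, `e₁e₂ = b e₃` with `a, b ∈ {0, 1}`.

The remaining data are a linear form `δ` and a vector `ω` on `J₀`. Since `δ(ω)` is an eigenvalue
of `L_{f₂}²` up to sign, nilpotency gives `δ(ω) = 0`, and the Jordan identity yields the relation
`δ(xy) ω = δ(y) xω + δ(x) yω`, which leaves few possibilities. Automorphisms of the even part,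
together with the rescalings of `f₁` and `f₂`, which multiply `δ` and `ω` by arbitrary nonzero
scalars, reduce them to the listed ones. The listed algebras are separated by which polynomial
identities and annihilation conditions they satisfy.
-/

open Module
open scoped Matrix

section StructureConstants

variable {R ι κ l : Type*} [CommSemiring R] [Fintype ι] [Fintype κ]

/-- The bilinear product of coordinate spaces with structure constants `c`, that is,
`eᵢ · fⱼ = ∑ₖ c i j k gₖ` on the standard bases. -/
def structMul (c : ι → κ → l → R) : (ι → R) →ₗ[R] (κ → R) →ₗ[R] (l → R) :=
  Fintype.linearCombination R fun i => Fintype.linearCombination R (c i)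

lemma structMul_apply (c : ι → κ → l → R) (x : ι → R) (y : κ → R) (k : l) :
    structMul c x y k = ∑ i, ∑ j, x i * y j * c i j k := by
  simp [structMul, Fintype.linearCombination_apply, Finset.mul_sum, mul_assoc]

lemma structMul_single_single [DecidableEq ι] [DecidableEq κ] (c : ι → κ → l → R) (i : ι)
    (j : κ) : structMul c (Pi.single i 1) (Pi.single j 1) = c i j := by
  simp [structMul]

lemma equivFun_eq_structMul [Fintype l] {V W U : Type*} [AddCommMonoid V] [AddCommMonoid W]
    [AddCommMonoid U] [Module R V] [Module R W] [Module R U] (E : Basis ι R V) (F : Basis κ R W)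
    (G : Basis l R U) (B : V →ₗ[R] W →ₗ[R] U) {c : ι → κ → l → R}
    (h : ∀ i j, B (E i) (F j) = ∑ k, c i j k • G k) (x : V) (y : W) :
    G.equivFun (B x y) = structMul c (E.equivFun x) (F.equivFun y) := by
  classical
  have key : B.compr₂ (G.equivFun : U →ₗ[R] l → R) =
      (structMul c).compl₁₂ (E.equivFun : V →ₗ[R] ι → R) (F.equivFun : W →ₗ[R] κ → R) := by
    refine LinearMap.ext_basis E F fun i j => ?_
    ext k
    simp [h, structMul_single_single, Finsupp.single_eq_pi_single,
      Pi.single_apply]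
  exact LinearMap.congr_fun₂ key x y

end StructureConstants

section Flag

variable {K V X : Type*} [Field K] [AddCommGroup V] [Module K V] (L : X → V → V)
  (hL : ∀ S : Submodule K V, S ≠ ⊤ → ∃ v ∉ S, ∀ x, L x v ∈ S)
include hL

lemma exists_linearIndependent_mem_span_Ioi :
    ∀ k ≤ finrank K V, ∃ v : Fin k → V, LinearIndependent K v ∧
      ∀ x i, L x (v i) ∈ Submodule.span K (v '' Set.Ioi i) := by
  intro k
  induction k with
  | zero => exact fun _ => ⟨![], linearIndependent_empty_type, fun _ i => i.elim0⟩
  | succ k ih =>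
    intro hk
    obtain ⟨v, hv, hLv⟩ := ih (Nat.le_of_succ_le hk)
    have hne : Submodule.span K (Set.range v) ≠ ⊤ := by
      intro htop
      have := finrank_range_le_card (R := K) v
      rw [Set.finrank, htop, finrank_top, Fintype.card_fin] at this
      lia
    obtain ⟨w, hw, hLw⟩ := hL _ hne
    have himage (s : Set (Fin k)) :
        (Fin.cons w v : Fin (k + 1) → V) '' (Fin.succ '' s) = v '' s := by
      simp [Set.image_image]
    refine ⟨Fin.cons w v, linearIndependent_finCons.2 ⟨hv, hw⟩, fun x => Fin.cases ?_ fun i => ?_⟩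
    · have hIoi : Set.Ioi (0 : Fin (k + 1)) = Fin.succ '' Set.univ := by
        rw [Set.image_univ, Fin.range_succ]
        ext j
        simp [Fin.pos_iff_ne_zero]
      rw [hIoi, himage, Set.image_univ]
      exact hLw x
    · rw [← Fin.image_succ_Ioi, himage]
      exact hLv x i

lemma exists_basis_repr_eq_zero [FiniteDimensional K V] {n : ℕ} (hn : finrank K V = n) :
    ∃ b : Basis (Fin n) K V, ∀ x i j, j ≤ i → b.repr (L x (b i)) j = 0 := by
  obtain ⟨v, hv, hLv⟩ := exists_linearIndependent_mem_span_Ioi L hL n hn.ge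
  let b := basisOfLinearIndependentOfCardEqFinrank' v hv (by simpa using hn.symm)
  have hb : ⇑b = v := coe_basisOfLinearIndependentOfCardEqFinrank' v hv _
  refine ⟨b, fun x i j hj => ?_⟩
  have hmem := hLv x i
  rw [← hb, b.mem_span_image] at hmem
  by_contra hne
  exact hj.not_gt (hmem (Finsupp.mem_support_iff.2 hne))

end Flag

section Multiplication

variable {m n : ℕ} (μ : Tensor m n)

/-- The product `J₀ × J₀ → J₀` of the superalgebra with structure tensor `μ`. -/
abbrev evenMul : (Fin m → ℂ) →ₗ[ℂ] (Fin m → ℂ) →ₗ[ℂ] (Fin m → ℂ) := structMul μ.1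

/-- The action `J₀ × J₁ → J₁` of the even part on the odd part. -/
abbrev evenAct : (Fin m → ℂ) →ₗ[ℂ] (Fin n → ℂ) →ₗ[ℂ] (Fin n → ℂ) := structMul μ.2.1

/-- The product `J₁ × J₁ → J₀` of the superalgebra with structure tensor `μ`. -/
abbrev oddMul : (Fin n → ℂ) →ₗ[ℂ] (Fin n → ℂ) →ₗ[ℂ] (Fin m → ℂ) := structMul μ.2.2

lemma mulOf_eq (x y : GV m n) :
    mulOf μ x y =
      (evenMul μ x.1 y.1 + oddMul μ x.2 y.2, evenAct μ x.1 y.2 + evenAct μ y.1 x.2) := by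
  ext k <;> simp [mulOf, structMul_apply]

lemma mulOf_even_even (x y : Fin m → ℂ) : mulOf μ (x, 0) (y, 0) = (evenMul μ x y, 0) := by
  simp [mulOf_eq]

lemma mulOf_even_odd (x : Fin m → ℂ) (f : Fin n → ℂ) :
    mulOf μ (x, 0) (0, f) = (0, evenAct μ x f) := by
  simp [mulOf_eq]

lemma mulOf_odd_even (x : Fin m → ℂ) (f : Fin n → ℂ) :
    mulOf μ (0, f) (x, 0) = (0, evenAct μ x f) := by
  simp [mulOf_eq]

lemma mulOf_odd_odd (f g : Fin n → ℂ) : mulOf μ (0, f) (0, g) = (oddMul μ f g, 0) := by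
  simp [mulOf_eq]

lemma isHom_even (x : Fin m → ℂ) : IsHom (n := n) 0 (x, 0) := Or.inl ⟨rfl, rfl⟩

lemma isHom_odd (f : Fin n → ℂ) : IsHom (m := m) 1 (0, f) := Or.inr ⟨rfl, rfl⟩

/-- Left multiplication by `x`. -/
def mulLeft (x : GV m n) : Module.End ℂ (GV m n) where
  toFun := mulOf μ x
  map_add' y z := by simp only [mulOf_eq, Prod.fst_add, Prod.snd_add, map_add,
    LinearMap.add_apply, Prod.mk_add_mk]; abel_nf
  map_smul' c y := by simp [mulOf_eq]

end Multiplication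

section Isomorphism

variable {m n : ℕ} {μ ν ρ : Tensor m n}

lemma iso_iff : Iso μ ν ↔
    ∃ (T : (Fin m → ℂ) ≃ₗ[ℂ] (Fin m → ℂ)) (S : (Fin n → ℂ) ≃ₗ[ℂ] (Fin n → ℂ)),
    (∀ x y, T (evenMul μ x y) = evenMul ν (T x) (T y)) ∧
    (∀ x f, S (evenAct μ x f) = evenAct ν (T x) (S f)) ∧
    ∀ f g, T (oddMul μ f g) = oddMul ν (S f) (S g) := by
  refine exists₂_congr fun T S => ⟨fun h => ⟨fun x y => ?_, fun x f => ?_, fun f g => ?_⟩, ?_⟩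
  · simpa [mulOf_eq] using h (x, 0) (y, 0)
  · simpa [mulOf_eq] using h (x, 0) (0, f)
  · simpa [mulOf_eq] using h (0, f) (0, g)
  · rintro ⟨h₀, h₁, h₂⟩ x y
    simp [mulOf_eq, h₀, h₁, h₂]

lemma Iso.refl (μ : Tensor m n) : Iso μ μ :=
  ⟨.refl ℂ _, .refl ℂ _, fun _ _ => rfl⟩

lemma Iso.symm (h : Iso μ ν) : Iso ν μ := by
  obtain ⟨T, S, h₀, h₁, h₂⟩ := iso_iff.1 h
  refine iso_iff.2 ⟨T.symm, S.symm, fun x y => ?_, fun x f => ?_, fun f g => ?_⟩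
  · rw [T.symm_apply_eq, h₀, T.apply_symm_apply, T.apply_symm_apply]
  · rw [S.symm_apply_eq, h₁, T.apply_symm_apply, S.apply_symm_apply]
  · rw [T.symm_apply_eq, h₂, S.apply_symm_apply, S.apply_symm_apply]

lemma Iso.trans (h : Iso μ ν) (h' : Iso ν ρ) : Iso μ ρ := by
  obtain ⟨T, S, h₀, h₁, h₂⟩ := iso_iff.1 h
  obtain ⟨T', S', h₀', h₁', h₂'⟩ := iso_iff.1 h'
  exact iso_iff.2 ⟨T.trans T', S.trans S', by simp [h₀, h₀'], by simp [h₁, h₁'], by simp [h₂, h₂']⟩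

lemma iso_of_basis (E : Basis (Fin m) ℂ (Fin m → ℂ)) (F : Basis (Fin n) ℂ (Fin n → ℂ))
    (h₀ : ∀ i j, evenMul μ (E i) (E j) = ∑ k, ν.1 i j k • E k)
    (h₁ : ∀ i j, evenAct μ (E i) (F j) = ∑ k, ν.2.1 i j k • F k)
    (h₂ : ∀ i j, oddMul μ (F i) (F j) = ∑ k, ν.2.2 i j k • E k) : Iso μ ν :=
  iso_iff.2 ⟨E.equivFun, F.equivFun, equivFun_eq_structMul E E E _ h₀,
    equivFun_eq_structMul E F F _ h₁, equivFun_eq_structMul F F E _ h₂⟩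

lemma Iso.exists_linearEquiv (h : Iso μ ν) : ∃ φ : GV m n ≃ₗ[ℂ] GV m n,
    (∀ x y, φ (mulOf μ x y) = mulOf ν (φ x) (φ y)) ∧ ∀ p x, IsHom p x → IsHom p (φ x) := by
  obtain ⟨T, S, h⟩ := h
  refine ⟨T.prodCongr S, h, fun p x => Or.imp ?_ ?_⟩ <;> rintro ⟨hp, hx⟩ <;> simp [hp, hx]

lemma IsJordanSuper.of_iso (hν : IsJordanSuper ν) (h : Iso μ ν) : IsJordanSuper μ := by
  obtain ⟨φ, hφ, hom⟩ := h.exists_linearEquiv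
  refine ⟨fun px py x y hx hy => φ.injective ?_,
    fun pw px py pz w x y z hw hx hy hz => φ.injective ?_⟩
  · simpa only [map_smul, hφ] using hν.1 px py _ _ (hom _ _ hx) (hom _ _ hy)
  · simpa only [superJ, map_add, map_sub, map_smul, map_zero, hφ] using
      hν.2 pw px py pz _ _ _ _ (hom _ _ hw) (hom _ _ hx) (hom _ _ hy) (hom _ _ hz)

end Isomorphism

section Nilpotent

variable {m n : ℕ} {μ ν : Tensor m n}

lemma mulOf_mem_powT_succ (x : GV m n) {w : GV m n} {k : ℕ} (hw : w ∈ powT μ k) :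
    mulOf μ x w ∈ powT μ (k + 1) := by
  cases k with
  | zero => simp [powT]
  | succ k =>
    rw [powT]
    refine Submodule.mem_iSup_of_mem (0 : Fin (k + 1)) (Submodule.subset_span ⟨x, ?_, w, hw, rfl⟩)
    simp [powT]

lemma IsNilpotentT.exists_notMem_forall_mul_mem (hμ : IsNilpotentT μ)
    {S : Submodule ℂ (GV m n)} (hS : S ≠ ⊤) : ∃ w ∉ S, ∀ x, mulOf μ x w ∈ S := by
  have hex : ∃ k, powT μ k ≤ S := by
    obtain ⟨k, -, hk⟩ := hμ
    exact ⟨k, hk.trans_le bot_le⟩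
  classical
  obtain ⟨k, hk⟩ : ∃ k, Nat.find hex = k + 1 := by
    refine Nat.exists_eq_succ_of_ne_zero fun h0 => hS (top_le_iff.1 ?_)
    simpa [h0, powT] using Nat.find_spec hex
  obtain ⟨w, hw, hwS⟩ := SetLike.not_le_iff_exists.1 (Nat.find_min hex (m := k) (by lia))
  exact ⟨w, hwS, fun x => (hk ▸ Nat.find_spec hex) (mulOf_mem_powT_succ x hw)⟩

lemma map_powT_le (φ : GV m n ≃ₗ[ℂ] GV m n)
    (hφ : ∀ x y, φ (mulOf μ x y) = mulOf ν (φ x) (φ y)) (k : ℕ) :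
    (powT μ k).map (φ : GV m n →ₗ[ℂ] GV m n) ≤ powT ν k := by
  induction k using Nat.strong_induction_on with
  | _ k ih =>
    match k with
    | 0 | 1 => simp [powT]
    | k + 2 =>
      rw [powT, powT, Submodule.map_iSup]
      refine iSup_mono fun i => ?_
      rw [mulSub, Submodule.map_span_le]
      rintro _ ⟨a, ha, b, hb, rfl⟩
      refine Submodule.subset_span ⟨φ a, ?_, φ b, ?_, hφ a b⟩
      · exact ih _ (by lia) (Submodule.mem_map_of_mem ha)
      · exact ih _ (by lia) (Submodule.mem_map_of_mem hb)

lemma IsNilpotentT.of_iso (hν : IsNilpotentT ν) (h : Iso μ ν) : IsNilpotentT μ := by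
  obtain ⟨k, hk, hνk⟩ := hν
  obtain ⟨φ, hφ, -⟩ := h.exists_linearEquiv
  refine ⟨k, hk, ?_⟩
  simpa [hνk, Submodule.map_eq_bot_iff] using map_powT_le φ hφ k

lemma IsNilpotentT.isNilpotent_mulLeft (hμ : IsNilpotentT μ) (x : GV m n) :
    IsNilpotent (mulLeft μ x) := by
  obtain ⟨k, -, hk⟩ := hμ
  have hpow (l : ℕ) (w : GV m n) : (mulLeft μ x ^ l) w ∈ powT μ l := by
    induction l with
    | zero => simp [powT]
    | succ l ih => rw [pow_succ']; exact mulOf_mem_powT_succ x ih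
  exact ⟨k, LinearMap.ext fun w => by simpa [hk] using hpow k w⟩

end Nilpotent

section JordanIdentities

variable {m n : ℕ} {μ : Tensor m n} (hμ : IsJordanSuper μ)
include hμ

lemma IsJordanSuper.evenMul_comm (x y : Fin m → ℂ) : evenMul μ x y = evenMul μ y x := by
  simpa [mulOf_eq, sgn] using hμ.1 0 0 _ _ (isHom_even x) (isHom_even y)

lemma IsJordanSuper.oddMul_antisymm (f g : Fin n → ℂ) : oddMul μ f g = -oddMul μ g f := by
  simpa [mulOf_eq, sgn] using hμ.1 1 1 _ _ (isHom_odd f) (isHom_odd g)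

lemma IsJordanSuper.evenMul_sq_sq (x : Fin m → ℂ) :
    evenMul μ (evenMul μ x x) (evenMul μ x x) = evenMul μ x (evenMul μ x (evenMul μ x x)) := by
  have hx := isHom_even (n := n) x
  have h := congrArg Prod.fst (hμ.2 0 0 0 0 _ _ _ _ hx hx hx hx)
  simp only [superJ, mulOf_even_even, sgn, pow_zero, mul_zero, add_zero, one_smul, Prod.fst_add,
    Prod.fst_sub, Prod.fst_zero] at h
  linear_combination (norm := module) (1 / 3 : ℂ) • h

lemma IsJordanSuper.evenAct_sq_evenAct (x : Fin m → ℂ) (f : Fin n → ℂ) :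
    (3 : ℂ) • evenAct μ (evenMul μ x x) (evenAct μ x f) =
      (2 : ℂ) • evenAct μ x (evenAct μ x (evenAct μ x f)) +
        evenAct μ (evenMul μ x (evenMul μ x x)) f := by
  have hx := isHom_even (n := n) x
  have h := congrArg Prod.snd (hμ.2 0 0 0 1 _ _ _ _ hx hx hx (isHom_odd f))
  simp only [superJ, mulOf_even_even, mulOf_even_odd, mulOf_odd_even, sgn, pow_zero, mul_zero,
    zero_mul, add_zero, one_smul, Prod.snd_add, Prod.snd_sub, Prod.snd_zero] at h
  linear_combination (norm := module) h

lemma IsJordanSuper.evenMul_oddMul_sq (f g : Fin n → ℂ) (x : Fin m → ℂ) :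
    evenMul μ (oddMul μ f g) (evenMul μ x x) + (2 : ℂ) • oddMul μ (evenAct μ x f) (evenAct μ x g) +
      oddMul μ g (evenAct μ (evenMul μ x x) f) =
        (2 : ℂ) • evenMul μ x (oddMul μ f (evenAct μ x g)) := by
  have hx := isHom_even (n := n) x
  have h := congrArg Prod.fst (hμ.2 1 1 0 0 _ _ _ _ (isHom_odd f) (isHom_odd g) hx hx)
  simp only [superJ, mulOf_even_even, mulOf_odd_even, mulOf_odd_odd, sgn, pow_zero,
    pow_one, mul_zero, zero_mul, mul_one, one_smul, neg_smul, Prod.fst_add, Prod.fst_sub,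
    Prod.fst_neg, Prod.fst_zero] at h
  linear_combination (norm := module) h

lemma IsJordanSuper.oddMul_evenAct_evenMul (f : Fin n → ℂ) (x y : Fin m → ℂ) :
    oddMul μ f (evenAct μ (evenMul μ x y) f) =
      evenMul μ x (oddMul μ f (evenAct μ y f)) + evenMul μ y (oddMul μ f (evenAct μ x f)) := by
  have hself : oddMul μ f f = 0 := self_eq_neg.1 (hμ.oddMul_antisymm f f)
  have hanti := hμ.oddMul_antisymm (evenAct μ x f) (evenAct μ y f)
  have h := congrArg Prod.fst
    (hμ.2 1 1 0 0 _ _ _ _ (isHom_odd f) (isHom_odd f) (isHom_even x) (isHom_even y))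
  simp only [superJ, mulOf_even_even, mulOf_odd_even, mulOf_odd_odd, sgn, pow_zero,
    pow_one, mul_zero, zero_mul, mul_one, one_smul, neg_smul, Prod.fst_add, Prod.fst_sub,
    Prod.fst_neg, Prod.fst_zero, hself, map_zero, LinearMap.zero_apply] at h
  linear_combination (norm := module) h - hanti

end JordanIdentities

section TriangularForm

variable {m n : ℕ} {μ : Tensor m n}

lemma IsNilpotentT.exists_basis_even (hμ : IsNilpotentT μ) :
    ∃ E : Basis (Fin m) ℂ (Fin m → ℂ),
      ∀ x i j, j ≤ i → E.repr (evenMul μ x (E i)) j = 0 := by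
  refine exists_basis_repr_eq_zero (fun x => evenMul μ x) (fun S hS => ?_) (by simp)
  have hne : S.prod (⊤ : Submodule ℂ (Fin n → ℂ)) ≠ ⊤ := by simpa [Submodule.prod_eq_top_iff]
  obtain ⟨w, hw, hmul⟩ := hμ.exists_notMem_forall_mul_mem hne
  exact ⟨w.1, by simpa using hw, fun x => by simpa [mulOf_eq] using hmul (x, 0)⟩

lemma IsNilpotentT.exists_basis_odd (hμ : IsNilpotentT μ) :
    ∃ F : Basis (Fin n) ℂ (Fin n → ℂ),
      ∀ x i j, j ≤ i → F.repr (evenAct μ x (F i)) j = 0 := by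
  refine exists_basis_repr_eq_zero (fun x => evenAct μ x) (fun S hS => ?_) (by simp)
  have hne : (⊤ : Submodule ℂ (Fin m → ℂ)).prod S ≠ ⊤ := by simpa [Submodule.prod_eq_top_iff]
  obtain ⟨w, hw, hmul⟩ := hμ.exists_notMem_forall_mul_mem hne
  exact ⟨w.2, by simpa using hw, fun x => by simpa [mulOf_eq] using hmul (x, 0)⟩

lemma IsNilpotentT.exists_iso_triangular (hμ : IsNilpotentT μ) :
    ∃ ν, Iso μ ν ∧ (∀ i j k, k ≤ j → ν.1 i j k = 0) ∧ ∀ i j k, j ≤ k → ν.2.1 i j k = 0 := by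
  obtain ⟨E, hE⟩ := hμ.exists_basis_even
  obtain ⟨F, hF⟩ := hμ.exists_basis_odd
  let F' := F.reindex Fin.revPerm
  refine ⟨(fun i j => E.repr (evenMul μ (E i) (E j)), fun i j => F'.repr (evenAct μ (E i) (F' j)),
    fun i j => E.repr (oddMul μ (F' i) (F' j))), iso_of_basis E F' ?_ ?_ ?_,
    fun i j k hk => hE _ _ _ hk, fun i j k hk => ?_⟩
  · simp only [E.sum_repr, implies_true]
  · simp only [F'.sum_repr, implies_true]
  · simp only [E.sum_repr, implies_true]
  · simpa [F'] using hF (E i) j.rev k.rev (Fin.rev_le_rev.2 hk)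

/-- The superalgebra with even part of structure constants `c` and odd part spanned by `f₁, f₂`,
with `eᵢ f₂ = δᵢ f₁` and `f₁ f₂ = ω`. -/
def oddExt (c : Fin m → Fin m → Fin m → ℂ) (δ ω : Fin m → ℂ) : Tensor m 2 :=
  (c, fun i j k => if j = 1 ∧ k = 0 then δ i else 0,
    fun i j k => if i = 0 ∧ j = 1 then ω k else if i = 1 ∧ j = 0 then -ω k else 0)

lemma evenMul_oddExt (c : Fin m → Fin m → Fin m → ℂ) (δ ω : Fin m → ℂ) :
    evenMul (oddExt c δ ω) = structMul c := rfl

lemma evenAct_oddExt (c : Fin m → Fin m → Fin m → ℂ) (δ ω x : Fin m → ℂ) (f : Fin 2 → ℂ) :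
    evenAct (oddExt c δ ω) x f = ![x ⬝ᵥ δ * f 1, 0] := by
  ext k
  fin_cases k <;> simp [oddExt, structMul_apply, dotProduct, Finset.sum_mul, mul_right_comm]

lemma oddMul_oddExt (c : Fin m → Fin m → Fin m → ℂ) (δ ω : Fin m → ℂ) (f g : Fin 2 → ℂ) :
    oddMul (oddExt c δ ω) f g = (f 0 * g 1 - f 1 * g 0) • ω := by
  ext k
  simp [oddExt, structMul_apply, Fin.sum_univ_two]
  ring

lemma IsJordanSuper.eq_oddExt {μ : Tensor m 2} (hμ : IsJordanSuper μ)
    (h : ∀ i j k, j ≤ k → μ.2.1 i j k = 0) :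
    μ = oddExt μ.1 (fun i => μ.2.1 i 1 0) (μ.2.2 0 1) := by
  have hanti (i j : Fin 2) : μ.2.2 i j = -μ.2.2 j i := by
    simpa only [structMul_single_single] using hμ.oddMul_antisymm (Pi.single i 1) (Pi.single j 1)
  have hself (i : Fin 2) : μ.2.2 i i = 0 := self_eq_neg.1 (hanti i i)
  refine Prod.ext rfl (Prod.ext ?_ ?_)
  · ext i j k
    fin_cases j <;> fin_cases k <;> simp [oddExt, h]
  · ext i j k
    fin_cases i <;> fin_cases j <;> simp [oddExt, hself, hanti 1 0]

/-- Structure constants of a commutative product on a three-dimensional space with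
`e₀² = p e₁ + q e₂`, `e₀ e₁ = r e₂` and `e₁² = s e₂`. -/
def triConst (p q r s : ℂ) : Fin 3 → Fin 3 → Fin 3 → ℂ :=
  ![![![0, p, q], ![0, 0, r], 0], ![![0, 0, r], ![0, 0, s], 0], 0]

lemma structMul_triConst (p q r s : ℂ) (x y : Fin 3 → ℂ) :
    structMul (triConst p q r s) x y =
      ![0, p * (x 0 * y 0), q * (x 0 * y 0) + r * (x 0 * y 1 + x 1 * y 0) + s * (x 1 * y 1)] := by
  ext k
  fin_cases k <;> simp [structMul_apply, triConst, Fin.sum_univ_three] <;> ring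

lemma eq_triConst {c : Fin 3 → Fin 3 → Fin 3 → ℂ} (hcomm : ∀ i j, c i j = c j i)
    (h : ∀ i j k, k ≤ j → c i j k = 0) :
    c = triConst (c 0 0 1) (c 0 0 2) (c 0 1 2) (c 1 1 2) := by
  have h' (i j k : Fin 3) (hk : k ≤ i) : c i j k = 0 := by rw [hcomm, h j i k hk]
  ext i j k
  fin_cases i <;> fin_cases j <;> fin_cases k <;> simp [triConst, h, h', hcomm 1 0]

lemma T32_eq_oddExt (a b : ℂ) (δ ω : Fin 3 → ℂ) :
    T32 a b δ ω = oddExt (triConst a 0 b 0) δ ω := by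
  refine Prod.ext ?_ rfl
  ext i j k
  fin_cases i <;> fin_cases j <;> fin_cases k <;> simp [T32, oddExt, triConst]

lemma IsJordanSuper.exists_iso_oddExt_triConst {μ : Tensor 3 2} (hJ : IsJordanSuper μ)
    (hN : IsNilpotentT μ) : ∃ p q r s δ ω, Iso μ (oddExt (triConst p q r s) δ ω) := by
  obtain ⟨ν, hμν, hν₀, hν₁⟩ := hN.exists_iso_triangular
  have hJν : IsJordanSuper ν := hJ.of_iso hμν.symm
  have hcomm (i j : Fin 3) : ν.1 i j = ν.1 j i := by
    simpa only [structMul_single_single] using hJν.evenMul_comm (Pi.single i 1) (Pi.single j 1)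
  rw [hJν.eq_oddExt hν₁, eq_triConst hcomm hν₀] at hμν
  exact ⟨_, _, _, _, _, _, hμν⟩

end TriangularForm

section Constraints

lemma IsNilpotentT.eq_zero_of_evenAct_oddMul {m n : ℕ} {μ : Tensor m n} (hμ : IsNilpotentT μ)
    {f g : Fin n → ℂ} {c : ℂ} (h : evenAct μ (oddMul μ f g) f = c • g) (hg : g ≠ 0) : c = 0 := by
  have hv : (mulLeft μ (0, f) ^ 2) (0, g) = c • ((0, g) : GV m n) := by
    simp [pow_two, mulLeft, mulOf_odd_odd, mulOf_odd_even, h]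
  have hev : ((mulLeft μ (0, f) ^ 2).HasEigenvalue c) :=
    Module.End.hasEigenvalue_of_hasEigenvector ⟨Module.End.mem_eigenspace_iff.2 hv, by simpa⟩
  exact (hev.isNilpotent_of_isNilpotent ((hμ.isNilpotent_mulLeft _).pow_of_pos two_ne_zero)).eq_zero

variable {m : ℕ} {c : Fin m → Fin m → Fin m → ℂ} {δ ω : Fin m → ℂ}

lemma IsNilpotentT.dotProduct_eq_zero (h : IsNilpotentT (oddExt c δ ω)) : ω ⬝ᵥ δ = 0 := by
  refine neg_eq_zero.1 (h.eq_zero_of_evenAct_oddMul (f := ![0, 1]) (g := ![1, 0]) ?_ (by simp))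
  simp [evenAct_oddExt, oddMul_oddExt]

variable (h : IsJordanSuper (oddExt c δ ω))
include h

lemma IsJordanSuper.dotProduct_cube (x : Fin m → ℂ) :
    structMul c x (structMul c x x) ⬝ᵥ δ = 0 :=
  Eq.symm (by simpa [evenAct_oddExt, evenMul_oddExt] using h.evenAct_sq_evenAct x ![0, 1])

lemma IsJordanSuper.structMul_sq (x : Fin m → ℂ) : structMul c ω (structMul c x x) = 0 := by
  simpa [evenAct_oddExt, oddMul_oddExt, evenMul_oddExt] using
    h.evenMul_oddMul_sq ![1, 0] ![0, 1] x

lemma IsJordanSuper.dotProduct_structMul_smul (x y : Fin m → ℂ) :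
    (structMul c x y ⬝ᵥ δ) • ω =
      (y ⬝ᵥ δ) • structMul c x ω + (x ⬝ᵥ δ) • structMul c y ω := by
  have h := h.oddMul_evenAct_evenMul ![0, 1] x y
  simp only [evenMul_oddExt, evenAct_oddExt, oddMul_oddExt, Matrix.cons_val_zero,
    Matrix.cons_val_one, Matrix.cons_val_fin_one, mul_zero, mul_one, one_mul, zero_sub, neg_smul,
    map_neg, map_smul] at h
  linear_combination (norm := module) -h

omit h in
lemma IsJordanSuper.sq_mul_eq_zero {p q r s : ℂ} {δ ω : Fin 3 → ℂ}
    (h : IsJordanSuper (oddExt (triConst p q r s) δ ω)) : p ^ 2 * s = 0 := by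
  have := congrFun (h.evenMul_sq_sq ![1, 0, 0]) 2
  simpa [evenMul_oddExt, structMul_triConst, pow_two, mul_comm] using this

end Constraints

section ChangeOfBasis

variable {m : ℕ} {c c' c'' : Fin m → Fin m → Fin m → ℂ} {P Q : Matrix (Fin m) (Fin m) ℂ}

/-- The rows of `P` form a basis in which the product with structure constants `c` has structure
constants `c'`. Coordinate vectors are row vectors, so `x ᵥ* P` is the vector with new
coordinates `x`. -/
def IsChangeOfBasis (P : Matrix (Fin m) (Fin m) ℂ) (c c' : Fin m → Fin m → Fin m → ℂ) : Prop :=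
  IsUnit P ∧ ∀ x y, structMul c (x ᵥ* P) (y ᵥ* P) = structMul c' x y ᵥ* P

lemma IsChangeOfBasis.trans (hP : IsChangeOfBasis P c c') (hQ : IsChangeOfBasis Q c' c'') :
    IsChangeOfBasis (Q * P) c c'' :=
  ⟨hQ.1.mul hP.1, fun x y => by simp only [← Matrix.vecMul_vecMul, hP.2, hQ.2]⟩

lemma IsChangeOfBasis.iso (hP : IsChangeOfBasis P c c') (δ ω : Fin m → ℂ) :
    Iso (oddExt c δ (ω ᵥ* P)) (oddExt c' (P *ᵥ δ) ω) := by
  have hinj : Function.Injective P.vecMulLinear := Matrix.vecMul_injective_of_isUnit hP.1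
  refine (iso_iff.2 ⟨.ofInjectiveEndo _ hinj, .refl ℂ _, fun x y => ?_, fun x f => ?_,
    fun f g => ?_⟩ : Iso _ _).symm
  · exact (hP.2 x y).symm
  · simp [evenAct_oddExt, Matrix.dotProduct_mulVec]
  · simp [oddMul_oddExt]

lemma IsChangeOfBasis.exists_iso (hP : IsChangeOfBasis P c c') (δ ω : Fin m → ℂ) :
    ∃ δ' ω', Iso (oddExt c δ ω) (oddExt c' δ' ω') := by
  obtain ⟨ω', rfl⟩ : ∃ ω', ω' ᵥ* P = ω := ⟨ω ᵥ* P⁻¹, by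
    rw [Matrix.vecMul_vecMul, Matrix.nonsing_inv_mul _ (P.isUnit_iff_isUnit_det.1 hP.1),
      Matrix.vecMul_one]⟩
  exact ⟨_, _, hP.iso δ ω'⟩

lemma iso_oddExt_smul_smul (c : Fin m → Fin m → Fin m → ℂ) (δ ω : Fin m → ℂ) {t u : ℂ}
    (ht : t ≠ 0) (hu : u ≠ 0) : Iso (oddExt c (t • δ) (u • ω)) (oddExt c δ ω) := by
  -- Rescaling `f₁, f₂` by `a, b` multiplies `δ` by `b / a` and `ω` by `a b`.
  obtain ⟨b, hb⟩ := IsAlgClosed.exists_pow_nat_eq (t * u) two_pos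
  have hb0 : b ≠ 0 := by
    rintro rfl
    simp [ht, hu] at hb
  let a : Fin 2 → ℂ := ![b / t, b]
  have ha (i : Fin 2) : a i ≠ 0 := by fin_cases i <;> simp [a, hb0, ht]
  refine iso_iff.2 ⟨.refl ℂ _, .piCongrRight fun i => .smulOfNeZero ℂ ℂ (a i) (ha i),
    fun x y => rfl, fun x f => ?_, fun f g => ?_⟩
  · ext k
    fin_cases k <;> simp [evenAct_oddExt, a]
    field_simp
  · have hab : b / t * b = u := by rw [div_mul_eq_mul_div, ← pow_two, hb, mul_div_cancel_left₀ _ ht]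
    simp only [oddMul_oddExt, map_smul, LinearEquiv.refl_apply, LinearEquiv.piCongrRight_apply,
      LinearEquiv.smulOfNeZero_apply, smul_eq_mul, Matrix.cons_val_zero, Matrix.cons_val_one,
      Matrix.cons_val_fin_one, ← hab, a]
    module

lemma isChangeOfBasis_of_det_ne_zero (hP : P.det ≠ 0)
    (h : ∀ x y, structMul c (x ᵥ* P) (y ᵥ* P) = structMul c' x y ᵥ* P) : IsChangeOfBasis P c c' :=
  ⟨P.isUnit_iff_isUnit_det.2 hP.isUnit, h⟩

end ChangeOfBasis

section EvenPart

variable {p q r s t : ℂ}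

lemma isChangeOfBasis_swap (q r s : ℂ) :
    IsChangeOfBasis !![0, 1, 0; 1, 0, 0; 0, 0, 1] (triConst 0 q r s) (triConst 0 s r q) := by
  refine isChangeOfBasis_of_det_ne_zero (by simp [Matrix.det_fin_three]) fun x y => ?_
  ext k
  fin_cases k <;> simp [structMul_triConst, Matrix.vecMul_eq_sum, Fin.sum_univ_three]
  ring

lemma isChangeOfBasis_one_zero (hp : p ≠ 0) (q : ℂ) :
    IsChangeOfBasis !![1, 0, 0; 0, p, q; 0, 0, 1] (triConst p q 0 0) (triConst 1 0 0 0) := by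
  refine isChangeOfBasis_of_det_ne_zero (by simp [Matrix.det_fin_three, hp]) fun x y => ?_
  ext k
  fin_cases k <;> simp [structMul_triConst, Matrix.vecMul_eq_sum, Fin.sum_univ_three] <;> ring

lemma isChangeOfBasis_one_one (hp : p ≠ 0) (hr : r ≠ 0) (q : ℂ) :
    IsChangeOfBasis !![1, 0, 0; 0, p, q; 0, 0, p * r] (triConst p q r 0) (triConst 1 0 1 0) := by
  refine isChangeOfBasis_of_det_ne_zero (by simp [Matrix.det_fin_three, hp, hr]) fun x y => ?_
  ext k
  fin_cases k <;> simp [structMul_triConst, Matrix.vecMul_eq_sum, Fin.sum_univ_three] <;> ring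

lemma isChangeOfBasis_zero_one (hr : r ≠ 0) :
    IsChangeOfBasis !![1, 0, 0; 0, 1, 0; 0, 0, r] (triConst 0 0 r 0) (triConst 0 0 1 0) := by
  refine isChangeOfBasis_of_det_ne_zero (by simp [Matrix.det_fin_three, hr]) fun x y => ?_
  ext k
  fin_cases k <;> simp [structMul_triConst, Matrix.vecMul_eq_sum, Fin.sum_univ_three]
  ring

lemma isChangeOfBasis_of_discr_eq_zero (hq : q ≠ 0) (h : r ^ 2 = q * s) :
    IsChangeOfBasis !![1, 0, 0; 0, 0, q; -r, q, 0] (triConst 0 q r s) (triConst 1 0 0 0) := by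
  refine isChangeOfBasis_of_det_ne_zero (by simp [Matrix.det_fin_three, hq]) fun x y => ?_
  ext k
  fin_cases k <;> simp [structMul_triConst, Matrix.vecMul_eq_sum, Fin.sum_univ_three]
  linear_combination -q * x 2 * y 2 * h

-- The first two rows are the isotropic vectors of the quadratic form `q x² + 2 r x y + s y²`.
lemma isChangeOfBasis_of_discr_ne_zero (hq : q ≠ 0) (ht : t ≠ 0) (h : t ^ 2 = r ^ 2 - q * s) :
    IsChangeOfBasis !![t - r, q, 0; -t - r, q, 0; 0, 0, -2 * t ^ 2 * q] (triConst 0 q r s)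
      (triConst 0 0 1 0) := by
  refine isChangeOfBasis_of_det_ne_zero ?_ fun x y => ?_
  · have hdet : Matrix.det !![t - r, q, 0; -t - r, q, 0; 0, 0, -2 * t ^ 2 * q] =
        -4 * t ^ 3 * q ^ 2 := by
      simp [Matrix.det_fin_three]
      ring
    rw [hdet]
    simp [hq, ht]
  · ext k
    fin_cases k <;> simp [structMul_triConst, Matrix.vecMul_eq_sum, Fin.sum_univ_three]
    grind

lemma exists_isChangeOfBasis_of_ne_zero (hq : q ≠ 0) (r s : ℂ) :
    ∃ P, ∃ a ∈ ({0, 1} : Set ℂ), ∃ b ∈ ({0, 1} : Set ℂ),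
      IsChangeOfBasis P (triConst 0 q r s) (triConst a 0 b 0) := by
  obtain ⟨t, ht⟩ := IsAlgClosed.exists_pow_nat_eq (r ^ 2 - q * s) two_pos
  rcases eq_or_ne t 0 with rfl | ht0
  · have h : r ^ 2 = q * s := by linear_combination -ht
    exact ⟨_, 1, by simp, 0, by simp, isChangeOfBasis_of_discr_eq_zero hq h⟩
  · exact ⟨_, 0, by simp, 1, by simp, isChangeOfBasis_of_discr_ne_zero hq ht0 ht⟩

lemma exists_isChangeOfBasis (h : p ^ 2 * s = 0) (q r : ℂ) :
    ∃ P, ∃ a ∈ ({0, 1} : Set ℂ), ∃ b ∈ ({0, 1} : Set ℂ),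
      IsChangeOfBasis P (triConst p q r s) (triConst a 0 b 0) := by
  rcases eq_or_ne p 0 with rfl | hp
  · rcases eq_or_ne q 0 with rfl | hq
    · rcases eq_or_ne s 0 with rfl | hs
      · rcases eq_or_ne r 0 with rfl | hr
        · exact ⟨1, 0, by simp, 0, by simp, isUnit_one, by simp⟩
        · exact ⟨_, 0, by simp, 1, by simp, isChangeOfBasis_zero_one hr⟩
      · obtain ⟨P, a, ha, b, hb, hP⟩ := exists_isChangeOfBasis_of_ne_zero hs r 0
        exact ⟨_, a, ha, b, hb, (isChangeOfBasis_swap 0 r s).trans hP⟩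
    · exact exists_isChangeOfBasis_of_ne_zero hq r s
  · obtain rfl : s = 0 := by simpa [hp] using h
    rcases eq_or_ne r 0 with rfl | hr
    · exact ⟨_, 1, by simp, 0, by simp, isChangeOfBasis_one_zero hp q⟩
    · exact ⟨_, 1, by simp, 1, by simp, isChangeOfBasis_one_one hp hr q⟩

end EvenPart

section Existence

/-- `μ` is isomorphic to one of the superalgebras of the classification. -/
def IsListed (μ : Tensor 3 2) : Prop := ∃ i, Iso μ (A32 i)

lemma isListed_A32 (i : Fin 29) : IsListed (A32 i) := ⟨i, .refl _⟩

lemma IsListed.of_iso {μ ν : Tensor 3 2} (hν : IsListed ν) (h : Iso μ ν) : IsListed μ :=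
  hν.imp fun _ => h.trans

variable {a b : ℂ} {δ ω δ' ω' : Fin 3 → ℂ}

lemma IsListed.of_isChangeOfBasis {P : Matrix (Fin 3) (Fin 3) ℂ} (h : IsListed (T32 a b δ' ω'))
    (hP : IsChangeOfBasis P (triConst a 0 b 0) (triConst a 0 b 0)) (hδ : P *ᵥ δ = δ')
    (hω : ω' ᵥ* P = ω) : IsListed (T32 a b δ ω) := by
  subst hδ hω
  simp only [T32_eq_oddExt] at h ⊢
  exact h.of_iso (hP.iso δ ω')

lemma isListed_smul_smul (h₀₀ : IsListed (T32 a b 0 0)) (h₀₁ : IsListed (T32 a b 0 ω))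
    (h₁₀ : IsListed (T32 a b δ 0)) (h₁₁ : IsListed (T32 a b δ ω)) (t u : ℂ) :
    IsListed (T32 a b (t • δ) (u • ω)) := by
  have rescale {δ ω : Fin 3 → ℂ} {t u : ℂ} (ht : t ≠ 0) (hu : u ≠ 0) (h : IsListed (T32 a b δ ω)) :
      IsListed (T32 a b (t • δ) (u • ω)) := by
    simp only [T32_eq_oddExt] at h ⊢
    exact h.of_iso (iso_oddExt_smul_smul _ δ ω ht hu)
  rcases eq_or_ne t 0 with rfl | ht <;> rcases eq_or_ne u 0 with rfl | hu
  · simpa using h₀₀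
  · simpa using rescale one_ne_zero hu h₀₁
  · simpa using rescale ht one_ne_zero h₁₀
  · exact rescale ht hu h₁₁

lemma exists_ne_zero_eq_smul_of_dotProduct_eq_zero (h : ω ⬝ᵥ δ = 0) :
    ∃ ω' ≠ 0, ω' ⬝ᵥ δ = 0 ∧ ∃ u : ℂ, ω = u • ω' := by
  rcases eq_or_ne ω 0 with rfl | hω
  · obtain ⟨ω', hω', h⟩ := exists_ne_zero_dotProduct_eq_zero δ
    exact ⟨ω', hω', h, 0, by simp⟩
  · exact ⟨ω, hω, h, 1, by simp⟩

open ComplexOrder in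
-- The conjugate `star δ` pairs nontrivially with `δ`, and `δ × star ω` is orthogonal to `δ`.
lemma exists_matrix_mulVec_eq_vecMul_eq (hδ : δ ≠ 0) (hω : ω ≠ 0) (h : ω ⬝ᵥ δ = 0) :
    ∃ P : Matrix (Fin 3) (Fin 3) ℂ, P.det ≠ 0 ∧ (∃ t : ℂ, P *ᵥ δ = t • ![1, 0, 0]) ∧
      ![0, 1, 0] ᵥ* P = ω := by
  refine ⟨.of ![star δ, ω, δ ⨯₃ star ω], ?_, ⟨star δ ⬝ᵥ δ, ?_⟩, ?_⟩
  · have hdet : Matrix.det (.of ![star δ, ω, δ ⨯₃ star ω]) = (ω ⬝ᵥ star ω) * (star δ ⬝ᵥ δ) := by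
      refine (triple_product_eq_det ..).symm.trans ?_
      rw [cross_cross_eq_smul_sub_smul', dotProduct_comm δ, h]
      simp
    rw [hdet]
    exact mul_ne_zero (by simpa using hω) (by simpa using hδ)
  · ext k
    fin_cases k <;> simp [h, dotProduct_comm _ δ]
  · ext k
    simp [Matrix.vecMul_eq_sum, Fin.sum_univ_three]

lemma isListed_zero_zero (h : ω ⬝ᵥ δ = 0) : IsListed (T32 0 0 δ ω) := by
  obtain ⟨ω', hω', hperp, u, rfl⟩ := exists_ne_zero_eq_smul_of_dotProduct_eq_zero h
  obtain ⟨δ', hδ', hperp', t, rfl⟩ :=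
    exists_ne_zero_eq_smul_of_dotProduct_eq_zero ((dotProduct_comm δ ω').trans hperp)
  obtain ⟨P, hP, ⟨c, hPδ⟩, hPω⟩ :=
    exists_matrix_mulVec_eq_vecMul_eq hδ' hω' ((dotProduct_comm ω' δ').trans hperp')
  have hzero (x y : Fin 3 → ℂ) : structMul (triConst 0 0 0 0) x y = 0 := by
    simp [structMul_triConst]
  have hbase : IsChangeOfBasis P (triConst 0 0 0 0) (triConst 0 0 0 0) :=
    isChangeOfBasis_of_det_ne_zero hP (by simp [hzero])
  have key : IsListed (T32 0 0 ((t * c) • ![1, 0, 0]) (u • ![0, 1, 0])) :=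
    isListed_smul_smul (isListed_A32 0) (isListed_A32 1) (isListed_A32 2) (isListed_A32 3) _ _
  refine key.of_isChangeOfBasis hbase ?_ ?_
  · rw [Matrix.mulVec_smul, hPδ, smul_smul]
  · rw [Matrix.smul_vecMul, hPω]

lemma isChangeOfBasis_triConst_one_zero {α d : ℂ} (hα : α ≠ 0) (hd : d ≠ 0) (β γ g : ℂ) :
    IsChangeOfBasis !![α, β, γ; 0, α ^ 2, 0; 0, g, d] (triConst 1 0 0 0) (triConst 1 0 0 0) := by
  refine isChangeOfBasis_of_det_ne_zero (by simp [Matrix.det_fin_three, hα, hd]) fun x y => ?_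
  ext k
  fin_cases k <;> simp [structMul_triConst, Matrix.vecMul_eq_sum, Fin.sum_univ_three]
  ring

lemma isChangeOfBasis_triConst_zero_one {α β : ℂ} (hα : α ≠ 0) (hβ : β ≠ 0) (γ ε : ℂ) :
    IsChangeOfBasis !![α, 0, γ; 0, β, ε; 0, 0, α * β] (triConst 0 0 1 0) (triConst 0 0 1 0) := by
  refine isChangeOfBasis_of_det_ne_zero (by simp [Matrix.det_fin_three, hα, hβ]) fun x y => ?_
  ext k
  fin_cases k <;> simp [structMul_triConst, Matrix.vecMul_eq_sum, Fin.sum_univ_three]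
  ring

lemma isChangeOfBasis_triConst_one_one (β : ℂ) :
    IsChangeOfBasis !![1, β, 0; 0, 1, 2 * β; 0, 0, 1] (triConst 1 0 1 0) (triConst 1 0 1 0) := by
  refine isChangeOfBasis_of_det_ne_zero (by simp [Matrix.det_fin_three]) fun x y => ?_
  ext k
  fin_cases k <;> simp [structMul_triConst, Matrix.vecMul_eq_sum, Fin.sum_univ_three]
  ring

section SquareOnly

lemma isListed_one_zero_of_act_one_ne_zero (hδ : δ 1 ≠ 0) : IsListed (T32 1 0 δ 0) := by
  have key : IsListed (T32 1 0 (δ 1 • ![0, 1, 0]) ((0 : ℂ) • 0)) :=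
    isListed_smul_smul (isListed_A32 4) (isListed_A32 4) (isListed_A32 8) (isListed_A32 8) _ _
  refine key.of_isChangeOfBasis (isChangeOfBasis_triConst_one_zero one_ne_zero one_ne_zero
    (-δ 0 / δ 1) 0 (-δ 2 / δ 1)) ?_ (by simp)
  ext k
  fin_cases k <;> simp [dotProduct, Fin.sum_univ_three, hδ]

lemma isListed_one_zero_of_oddMul_zero_ne_zero (hω : ω 0 ≠ 0) : IsListed (T32 1 0 0 ω) := by
  refine (isListed_A32 5).of_isChangeOfBasis
    (isChangeOfBasis_triConst_one_zero hω one_ne_zero (ω 1) (ω 2) 0) (by simp) ?_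
  ext k
  fin_cases k <;> simp

lemma isListed_one_zero_of_act_two_ne_zero (hδ₁ : δ 1 = 0) (hδ₂ : δ 2 ≠ 0) (u : ℂ) :
    IsListed (T32 1 0 δ (u • ![0, 1, 0])) := by
  have key : IsListed (T32 1 0 (δ 2 • ![0, 0, 1]) (u • ![0, 1, 0])) :=
    isListed_smul_smul (isListed_A32 4) (isListed_A32 6) (isListed_A32 9) (isListed_A32 10) _ _
  refine key.of_isChangeOfBasis
    (isChangeOfBasis_triConst_one_zero one_ne_zero one_ne_zero 0 (-δ 0 / δ 2) 0) ?_ ?_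
  · ext k
    fin_cases k <;> simp [dotProduct, Fin.sum_univ_three, hδ₁, hδ₂]
  · ext k
    fin_cases k <;> simp

lemma isListed_one_zero_of_oddMul_two_ne_zero (hω₀ : ω 0 = 0) (hω₂ : ω 2 ≠ 0) (t : ℂ) :
    IsListed (T32 1 0 (t • ![1, 0, 0]) ω) := by
  have key : IsListed (T32 1 0 (t • ![1, 0, 0]) ((1 : ℂ) • ![0, 0, 1])) :=
    isListed_smul_smul (isListed_A32 4) (isListed_A32 7) (isListed_A32 11) (isListed_A32 13) _ _
  refine key.of_isChangeOfBasis
    (isChangeOfBasis_triConst_one_zero one_ne_zero hω₂ 0 0 (ω 1)) ?_ ?_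
  · ext k
    fin_cases k <;> simp
  · ext k
    fin_cases k <;> simp [hω₀]

variable (h : IsJordanSuper (T32 1 0 δ ω))
include h

lemma IsJordanSuper.relations_one_zero :
    δ 1 * ω 0 = 0 ∧ δ 1 * ω 1 = 2 * δ 0 * ω 0 ∧ δ 1 * ω 2 = 0 ∧ δ 2 * ω 0 = 0 := by
  rw [T32_eq_oddExt] at h
  have h₀₀ (k) := congrFun (h.dotProduct_structMul_smul ![1, 0, 0] ![1, 0, 0]) k
  have h₀₂ (k) := congrFun (h.dotProduct_structMul_smul ![1, 0, 0] ![0, 0, 1]) k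
  refine ⟨?_, ?_, ?_, ?_⟩
  · simpa [structMul_triConst, Matrix.vecHead, Matrix.vecTail] using h₀₀ 0
  · simpa [structMul_triConst, Matrix.vecHead, Matrix.vecTail, ← two_mul, mul_assoc] using h₀₀ 1
  · simpa [structMul_triConst, Matrix.vecHead, Matrix.vecTail] using h₀₀ 2
  · simpa [structMul_triConst, Matrix.vecHead, Matrix.vecTail] using (h₀₂ 1).symm

lemma isListed_one_zero (hd : ω ⬝ᵥ δ = 0) : IsListed (T32 1 0 δ ω) := by
  obtain ⟨h₁₀, h₁₁, h₁₂, h₂₀⟩ := h.relations_one_zero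
  rw [Matrix.vec3_dotProduct] at hd
  rcases ne_or_eq (δ 1) 0 with hδ₁ | hδ₁
  · obtain rfl : ω = 0 := by
      ext k
      fin_cases k <;> simp <;> grind
    exact isListed_one_zero_of_act_one_ne_zero hδ₁
  rcases ne_or_eq (ω 0) 0 with hω₀ | hω₀
  · obtain rfl : δ = 0 := by
      ext k
      fin_cases k <;> simp <;> grind
    exact isListed_one_zero_of_oddMul_zero_ne_zero hω₀
  rcases ne_or_eq (δ 2) 0 with hδ₂ | hδ₂
  · have hω₂ : ω 2 = 0 := by simpa [hδ₁, hω₀, hδ₂] using hd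
    have hω : ω = ω 1 • ![0, 1, 0] := by
      ext k
      fin_cases k <;> simp [hω₀, hω₂]
    rw [hω]
    exact isListed_one_zero_of_act_two_ne_zero hδ₁ hδ₂ _
  have hδ : δ = δ 0 • ![1, 0, 0] := by
    ext k
    fin_cases k <;> simp [hδ₁, hδ₂]
  rcases ne_or_eq (ω 2) 0 with hω₂ | hω₂
  · rw [hδ]
    exact isListed_one_zero_of_oddMul_two_ne_zero hω₀ hω₂ _
  have hω : ω = ω 1 • ![0, 1, 0] := by
    ext k
    fin_cases k <;> simp [hω₀, hω₂]
  rw [hδ, hω]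
  exact isListed_smul_smul (isListed_A32 4) (isListed_A32 6) (isListed_A32 11) (isListed_A32 12) _ _

end SquareOnly

section ProductOnly

lemma isListed_zero_one_of_swap (h : IsListed (T32 0 1 ![δ 1, δ 0, δ 2] ![ω 1, ω 0, ω 2])) :
    IsListed (T32 0 1 δ ω) := by
  refine h.of_isChangeOfBasis (isChangeOfBasis_swap 0 1 0) ?_ ?_ <;> ext k <;> fin_cases k <;>
    simp [dotProduct, Fin.sum_univ_three]

lemma isListed_zero_one_of_act_two_ne_zero (hδ : δ 2 ≠ 0) : IsListed (T32 0 1 δ 0) := by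
  have key : IsListed (T32 0 1 (δ 2 • ![0, 0, 1]) ((0 : ℂ) • 0)) :=
    isListed_smul_smul (isListed_A32 14) (isListed_A32 14) (isListed_A32 18) (isListed_A32 18) _ _
  refine key.of_isChangeOfBasis (isChangeOfBasis_triConst_zero_one one_ne_zero one_ne_zero
    (-δ 0 / δ 2) (-δ 1 / δ 2)) ?_ (by simp)
  ext k
  fin_cases k <;> simp [dotProduct, Fin.sum_univ_three, hδ]

lemma isListed_zero_one_of_oddMul_zero_ne_zero (hω : ω 0 ≠ 0) : IsListed (T32 0 1 0 ω) := by
  rcases eq_or_ne (ω 1) 0 with hω₁ | hω₁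
  · refine (isListed_A32 15).of_isChangeOfBasis
      (isChangeOfBasis_triConst_zero_one hω one_ne_zero (ω 2) 0) (by simp) ?_
    ext k
    fin_cases k <;> simp [hω₁]
  · refine (isListed_A32 17).of_isChangeOfBasis
      (isChangeOfBasis_triConst_zero_one hω hω₁ (ω 2) 0) (by simp) ?_
    ext k
    fin_cases k <;> simp [Matrix.vecMul_eq_sum, Fin.sum_univ_three]

lemma isListed_zero_one_smul (t u : ℂ) :
    IsListed (T32 0 1 (t • ![1, 0, 0]) (u • ![0, 0, 1])) :=
  isListed_smul_smul (isListed_A32 14) (isListed_A32 16) (isListed_A32 19) (isListed_A32 20) t u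

lemma isListed_zero_one_of_act_ne_zero (hδ₀ : δ 0 ≠ 0) (hδ₁ : δ 1 ≠ 0) (hδ₂ : δ 2 = 0) (u : ℂ) :
    IsListed (T32 0 1 δ (u • ![0, 0, 1])) := by
  have key : IsListed (T32 0 1 ((1 : ℂ) • ![1, 1, 0]) ((u * (δ 0 * δ 1)) • ![0, 0, 1])) :=
    isListed_smul_smul (isListed_A32 14) (isListed_A32 16) (isListed_A32 21) (isListed_A32 22) _ _
  refine key.of_isChangeOfBasis (isChangeOfBasis_triConst_zero_one (inv_ne_zero hδ₀)
    (inv_ne_zero hδ₁) 0 0) ?_ ?_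
  · ext k
    fin_cases k <;> simp [dotProduct, Fin.sum_univ_three, hδ₀, hδ₁, hδ₂]
  · ext k
    fin_cases k <;> simp
    field_simp

lemma isListed_zero_one_of_act_two_eq_zero (hδ : δ 2 = 0) (u : ℂ) :
    IsListed (T32 0 1 δ (u • ![0, 0, 1])) := by
  rcases eq_or_ne (δ 1) 0 with hδ₁ | hδ₁
  · have h : δ = δ 0 • ![1, 0, 0] := by
      ext k
      fin_cases k <;> simp [hδ₁, hδ]
    rw [h]
    exact isListed_zero_one_smul _ _
  rcases eq_or_ne (δ 0) 0 with hδ₀ | hδ₀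
  · refine isListed_zero_one_of_swap ?_
    simpa [hδ₀, hδ] using isListed_zero_one_smul (δ 1) u
  · exact isListed_zero_one_of_act_ne_zero hδ₀ hδ₁ hδ u

variable (h : IsJordanSuper (T32 0 1 δ ω))
include h

lemma IsJordanSuper.relations_zero_one :
    δ 0 * ω 1 = 0 ∧ δ 1 * ω 0 = 0 ∧ δ 2 * ω 0 = 0 ∧ δ 2 * ω 1 = 0 ∧
      δ 2 * ω 2 = δ 0 * ω 0 + δ 1 * ω 1 := by
  rw [T32_eq_oddExt] at h
  have h₀₀ (k) := congrFun (h.dotProduct_structMul_smul ![1, 0, 0] ![1, 0, 0]) k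
  have h₁₁ (k) := congrFun (h.dotProduct_structMul_smul ![0, 1, 0] ![0, 1, 0]) k
  have h₀₁ (k) := congrFun (h.dotProduct_structMul_smul ![1, 0, 0] ![0, 1, 0]) k
  refine ⟨?_, ?_, ?_, ?_, ?_⟩
  · simpa [structMul_triConst, Matrix.vecHead, Matrix.vecTail, ← two_mul] using (h₀₀ 2).symm
  · simpa [structMul_triConst, Matrix.vecHead, Matrix.vecTail, ← two_mul] using (h₁₁ 2).symm
  · simpa [structMul_triConst, Matrix.vecHead, Matrix.vecTail] using h₀₁ 0
  · simpa [structMul_triConst, Matrix.vecHead, Matrix.vecTail] using h₀₁ 1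
  · simpa [structMul_triConst, Matrix.vecHead, Matrix.vecTail, add_comm] using h₀₁ 2

lemma isListed_zero_one (hd : ω ⬝ᵥ δ = 0) : IsListed (T32 0 1 δ ω) := by
  obtain ⟨h₀₁, h₁₀, h₂₀, h₂₁, h₂₂⟩ := h.relations_zero_one
  rw [Matrix.vec3_dotProduct] at hd
  rcases ne_or_eq (δ 2) 0 with hδ₂ | hδ₂
  · obtain rfl : ω = 0 := by
      ext k
      fin_cases k <;> simp <;> grind
    exact isListed_zero_one_of_act_two_ne_zero hδ₂
  by_cases hω : ω 0 = 0 ∧ ω 1 = 0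
  · have hω' : ω = ω 2 • ![0, 0, 1] := by
      ext k
      fin_cases k <;> simp [hω]
    rw [hω']
    exact isListed_zero_one_of_act_two_eq_zero hδ₂ _
  obtain rfl : δ = 0 := by
    ext k
    fin_cases k <;> simp <;> grind
  rcases ne_or_eq (ω 0) 0 with hω₀ | hω₀
  · exact isListed_zero_one_of_oddMul_zero_ne_zero hω₀
  · have hω₁ : ω 1 ≠ 0 := fun hω₁ => hω ⟨hω₀, hω₁⟩
    have hzero : ![(0 : Fin 3 → ℂ) 1, (0 : Fin 3 → ℂ) 0, (0 : Fin 3 → ℂ) 2] = 0 := by simp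
    refine isListed_zero_one_of_swap ?_
    rw [hzero]
    exact isListed_zero_one_of_oddMul_zero_ne_zero hω₁

end ProductOnly

section SquareAndProduct

lemma isListed_one_one_of_act_one_ne_zero (hδ₁ : δ 1 ≠ 0) (hδ₂ : δ 2 = 0) :
    IsListed (T32 1 1 δ 0) := by
  have key : IsListed (T32 1 1 (δ 1 • ![0, 1, 0]) ((0 : ℂ) • 0)) :=
    isListed_smul_smul (isListed_A32 23) (isListed_A32 23) (isListed_A32 26) (isListed_A32 26) _ _
  refine key.of_isChangeOfBasis (isChangeOfBasis_triConst_one_one (-δ 0 / δ 1)) ?_ (by simp)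
  ext k
  fin_cases k <;> simp [dotProduct, Fin.sum_univ_three, hδ₁, hδ₂]

lemma isListed_one_one_of_oddMul_one_ne_zero (hω₀ : ω 0 = 0) (hω₁ : ω 1 ≠ 0) :
    IsListed (T32 1 1 0 ω) := by
  have key : IsListed (T32 1 1 ((0 : ℂ) • 0) (ω 1 • ![0, 1, 0])) :=
    isListed_smul_smul (isListed_A32 23) (isListed_A32 24) (isListed_A32 23) (isListed_A32 24) _ _
  refine key.of_isChangeOfBasis (isChangeOfBasis_triConst_one_one (ω 2 / (2 * ω 1))) (by simp) ?_
  ext k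
  fin_cases k <;> simp [hω₀]
  field_simp

variable (h : IsJordanSuper (T32 1 1 δ ω))
include h

lemma IsJordanSuper.relations_one_one :
    δ 2 = 0 ∧ ω 0 = 0 ∧ δ 1 * ω 1 = 0 ∧ δ 1 * ω 2 = 2 * δ 0 * ω 1 := by
  rw [T32_eq_oddExt] at h
  have h₀₀ (k) := congrFun (h.dotProduct_structMul_smul ![1, 0, 0] ![1, 0, 0]) k
  have hω : ω 0 = 0 := by
    simpa [structMul_triConst] using congrFun (h.structMul_sq ![1, 0, 0]) 2
  refine ⟨?_, hω, ?_, ?_⟩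
  · simpa [structMul_triConst, Matrix.vecHead, Matrix.vecTail] using h.dotProduct_cube ![1, 0, 0]
  · simpa [structMul_triConst, Matrix.vecHead, Matrix.vecTail, hω] using h₀₀ 1
  · simpa [structMul_triConst, Matrix.vecHead, Matrix.vecTail, ← two_mul, mul_assoc] using h₀₀ 2

lemma isListed_one_one : IsListed (T32 1 1 δ ω) := by
  obtain ⟨hδ₂, hω₀, h₁₁, h₁₂⟩ := h.relations_one_one
  rcases ne_or_eq (δ 1) 0 with hδ₁ | hδ₁
  · obtain rfl : ω = 0 := by
      ext k
      fin_cases k <;> simp <;> grind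
    exact isListed_one_one_of_act_one_ne_zero hδ₁ hδ₂
  rcases ne_or_eq (ω 1) 0 with hω₁ | hω₁
  · obtain rfl : δ = 0 := by
      ext k
      fin_cases k <;> simp <;> grind
    exact isListed_one_one_of_oddMul_one_ne_zero hω₀ hω₁
  have hδ : δ = δ 0 • ![1, 0, 0] := by
    ext k
    fin_cases k <;> simp [hδ₁, hδ₂]
  have hω : ω = ω 2 • ![0, 0, 1] := by
    ext k
    fin_cases k <;> simp [hω₀, hω₁]
  rw [hδ, hω]
  exact isListed_smul_smul (isListed_A32 23) (isListed_A32 25) (isListed_A32 27) (isListed_A32 28)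
    _ _

end SquareAndProduct

lemma IsJordanSuper.isListed {μ : Tensor 3 2} (hJ : IsJordanSuper μ) (hN : IsNilpotentT μ) :
    IsListed μ := by
  obtain ⟨p, q, r, s, δ, ω, hμ⟩ := hJ.exists_iso_oddExt_triConst hN
  obtain ⟨P, a, ha, b, hb, hP⟩ := exists_isChangeOfBasis (hJ.of_iso hμ.symm).sq_mul_eq_zero q r
  obtain ⟨δ', ω', hν⟩ := hP.exists_iso δ ω
  rw [← T32_eq_oddExt] at hν
  have hiso := hμ.trans hν
  have hJ' : IsJordanSuper (T32 a b δ' ω') := hJ.of_iso hiso.symm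
  have hd : ω' ⬝ᵥ δ' = 0 := (T32_eq_oddExt a b δ' ω' ▸ hN.of_iso hiso.symm).dotProduct_eq_zero
  refine IsListed.of_iso ?_ hiso
  rcases ha with rfl | rfl <;> rcases hb with rfl | rfl
  · exact isListed_zero_zero hd
  · exact isListed_zero_one hJ' hd
  · exact isListed_one_zero hJ' hd
  · exact isListed_one_one hJ'

end Existence

section Invariants

/-- Ten isomorphism invariants of a superalgebra which together separate the algebras `A32 i`. -/
def invariant {m n : ℕ} (μ : Tensor m n) : Fin 10 → Prop :=
  ![∀ x y, evenMul μ x y = 0,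
    ∀ x y z, evenMul μ (evenMul μ x y) z = 0,
    ∀ x y, evenMul μ x x = 0 → evenMul μ y y = 0 → evenMul μ x y = 0,
    ∀ x f, evenAct μ x f = 0,
    ∀ x y f, evenAct μ (evenMul μ x y) f = 0,
    ∀ x, (∀ f, evenAct μ x f = 0) → evenMul μ x x = 0,
    ∀ f g, oddMul μ f g = 0,
    ∀ f g x, evenMul μ (oddMul μ f g) x = 0,
    ∀ f g, evenMul μ (oddMul μ f g) (oddMul μ f g) = 0,
    ∀ f g, ∃ x y, evenMul μ x y = oddMul μ f g]

lemma Iso.invariant_iff {m n : ℕ} {μ ν : Tensor m n} (h : Iso μ ν) (k : Fin 10) :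
    invariant μ k ↔ invariant ν k := by
  obtain ⟨T, S, h₀, h₁, h₂⟩ := iso_iff.1 h
  fin_cases k
  · exact T.forall_congr fun x => T.forall_congr fun y => by simp [← h₀]
  · exact T.forall_congr fun x => T.forall_congr fun y => T.forall_congr fun z => by simp [← h₀]
  · exact T.forall_congr fun x => T.forall_congr fun y => by simp [← h₀]
  · exact T.forall_congr fun x => S.forall_congr fun f => by simp [← h₁]
  · exact T.forall_congr fun x => T.forall_congr fun y => S.forall_congr fun f => by
      simp [← h₀, ← h₁]
  · exact T.forall_congr fun x => imp_congr (S.forall_congr fun f => by simp [← h₁])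
      (by simp [← h₀])
  · exact S.forall_congr fun f => S.forall_congr fun g => by simp [← h₂]
  · exact S.forall_congr fun f => S.forall_congr fun g => T.forall_congr fun x => by
      simp [← h₂, ← h₀]
  · exact S.forall_congr fun f => S.forall_congr fun g => by simp [← h₂, ← h₀]
  · exact S.forall_congr fun f => S.forall_congr fun g => T.exists_congr fun x =>
      T.exists_congr fun y => by simp [← h₂, ← h₀]

variable (a b : ℂ) (δ ω : Fin 3 → ℂ)

lemma evenMul_T32 (x y : Fin 3 → ℂ) :
    evenMul (T32 a b δ ω) x y = ![0, a * (x 0 * y 0), b * (x 0 * y 1 + x 1 * y 0)] := by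
  simp [T32_eq_oddExt, evenMul_oddExt, structMul_triConst]

lemma evenAct_T32 (x : Fin 3 → ℂ) (f : Fin 2 → ℂ) :
    evenAct (T32 a b δ ω) x f = ![(x 0 * δ 0 + x 1 * δ 1 + x 2 * δ 2) * f 1, 0] := by
  rw [T32_eq_oddExt, evenAct_oddExt, Matrix.vec3_dotProduct]

lemma oddMul_T32 (f g : Fin 2 → ℂ) :
    oddMul (T32 a b δ ω) f g = (f 0 * g 1 - f 1 * g 0) • ω := by
  rw [T32_eq_oddExt, oddMul_oddExt]

lemma T32_evenMul_eq_zero_iff : (∀ x y, evenMul (T32 a b δ ω) x y = 0) ↔ a = 0 ∧ b = 0 := by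
  simp only [evenMul_T32]
  refine ⟨fun h => ⟨?_, ?_⟩, ?_⟩
  · simpa using h ![1, 0, 0] ![1, 0, 0]
  · simpa using h ![1, 0, 0] ![0, 1, 0]
  · rintro ⟨rfl, rfl⟩
    simp

lemma T32_evenMul_evenMul_eq_zero_iff :
    (∀ x y z, evenMul (T32 a b δ ω) (evenMul (T32 a b δ ω) x y) z = 0) ↔ a = 0 ∨ b = 0 := by
  simp only [evenMul_T32]
  refine ⟨fun h => ?_, ?_⟩
  · simpa [or_comm] using h ![1, 0, 0] ![1, 0, 0] ![1, 0, 0]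
  · rintro (rfl | rfl) <;> simp

lemma T32_evenMul_eq_zero_of_sq_eq_zero_iff :
    (∀ x y, evenMul (T32 a b δ ω) x x = 0 → evenMul (T32 a b δ ω) y y = 0 →
      evenMul (T32 a b δ ω) x y = 0) ↔ (a = 0 → b = 0) := by
  simp only [evenMul_T32]
  refine ⟨?_, fun h x y => ?_⟩
  · rintro h rfl
    simpa using h ![1, 0, 0] ![0, 1, 0]
  · rcases eq_or_ne a 0 with rfl | ha
    · simp [h rfl]
    · simp +contextual [ha]

lemma T32_evenAct_eq_zero_iff : (∀ x f, evenAct (T32 a b δ ω) x f = 0) ↔ δ = 0 := by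
  simp only [evenAct_T32]
  refine ⟨fun h => ?_, ?_⟩
  · have h₀ := h ![1, 0, 0] ![0, 1]
    have h₁ := h ![0, 1, 0] ![0, 1]
    have h₂ := h ![0, 0, 1] ![0, 1]
    ext k
    fin_cases k <;> simp_all
  · rintro rfl
    simp

lemma T32_evenAct_evenMul_eq_zero_iff :
    (∀ x y f, evenAct (T32 a b δ ω) (evenMul (T32 a b δ ω) x y) f = 0) ↔
      (a = 0 ∨ δ 1 = 0) ∧ (b = 0 ∨ δ 2 = 0) := by
  simp only [evenAct_T32, evenMul_T32]
  refine ⟨fun h => ⟨?_, ?_⟩, ?_⟩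
  · simpa using h ![1, 0, 0] ![1, 0, 0] ![0, 1]
  · simpa using h ![1, 0, 0] ![0, 1, 0] ![0, 1]
  · rintro ⟨rfl | hδ₁, rfl | hδ₂⟩ <;> simp [*]

lemma T32_sq_eq_zero_of_evenAct_eq_zero_iff :
    (∀ x, (∀ f, evenAct (T32 a b δ ω) x f = 0) → evenMul (T32 a b δ ω) x x = 0) ↔
      (a = 0 ∨ (δ 0 ≠ 0 ∧ δ 1 = 0 ∧ δ 2 = 0)) ∧
        (b = 0 ∨ (δ 2 = 0 ∧ δ 0 * δ 1 = 0 ∧ (δ 0 ≠ 0 ∨ δ 1 ≠ 0))) := by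
  have hker (x : Fin 3 → ℂ) : (∀ f, evenAct (T32 a b δ ω) x f = 0) ↔
      x 0 * δ 0 + x 1 * δ 1 + x 2 * δ 2 = 0 := by
    simp only [evenAct_T32]
    exact ⟨fun h => by simpa using h ![0, 1], fun h f => by simp [h]⟩
  simp only [hker, evenMul_T32]
  refine ⟨fun h => ?_, fun h x hx => ?_⟩
  · have h₀ : δ 0 = 0 → a = 0 := by simpa using h ![1, 0, 0]
    have h₁ : (a = 0 ∨ δ 1 = 0) ∧ (b = 0 ∨ δ 0 * δ 1 = 0) := by
      simpa [mul_comm (δ 1), ← two_mul] using h ![δ 1, -δ 0, 0]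
    have h₂ : (a = 0 ∨ δ 2 = 0) ∧ (b = 0 ∨ δ 2 = 0) := by
      simpa [← two_mul] using h ![δ 2, δ 2, -δ 0 - δ 1] (by simp; ring)
    have h₃ : δ 0 + δ 1 = 0 → a = 0 ∧ b = 0 := by simpa [← two_mul] using h ![1, 1, 0]
    grind
  · have ha : a * (x 0 * x 0) = 0 := by grind
    have hb : b * (x 0 * x 1 + x 1 * x 0) = 0 := by grind
    simp only [ha, hb, Matrix.cons_eq_zero_iff, Matrix.zero_empty, and_self]

lemma T32_oddMul_eq_zero_iff : (∀ f g, oddMul (T32 a b δ ω) f g = 0) ↔ ω = 0 := by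
  simp only [oddMul_T32]
  refine ⟨fun h => ?_, ?_⟩
  · simpa using h ![1, 0] ![0, 1]
  · rintro rfl
    simp

lemma T32_evenMul_oddMul_eq_zero_iff :
    (∀ f g x, evenMul (T32 a b δ ω) (oddMul (T32 a b δ ω) f g) x = 0) ↔
      (a = 0 ∨ ω 0 = 0) ∧ (b = 0 ∨ ω 0 = 0 ∧ ω 1 = 0) := by
  simp only [oddMul_T32, evenMul_T32]
  refine ⟨fun h => ?_, ?_⟩
  · have h₀ : (a = 0 ∨ ω 0 = 0) ∧ (b = 0 ∨ ω 1 = 0) := by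
      simpa using h ![1, 0] ![0, 1] ![1, 0, 0]
    have h₁ : b = 0 ∨ ω 0 = 0 := by simpa using h ![1, 0] ![0, 1] ![0, 1, 0]
    tauto
  · rintro ⟨rfl | h₀, rfl | ⟨h₁, h₂⟩⟩ <;> simp [*]

lemma T32_sq_oddMul_eq_zero_iff :
    (∀ f g, evenMul (T32 a b δ ω) (oddMul (T32 a b δ ω) f g) (oddMul (T32 a b δ ω) f g) = 0) ↔
      (a = 0 ∨ ω 0 = 0) ∧ (b = 0 ∨ ω 0 = 0 ∨ ω 1 = 0) := by
  simp only [oddMul_T32, evenMul_T32]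
  refine ⟨fun h => ?_, ?_⟩
  · simpa [mul_comm (ω 1), ← two_mul] using h ![1, 0] ![0, 1]
  · rintro ⟨rfl | h₀, rfl | h₁ | h₁⟩ <;> simp [*]

lemma T32_exists_evenMul_eq_oddMul_iff :
    (∀ f g, ∃ x y, evenMul (T32 a b δ ω) x y = oddMul (T32 a b δ ω) f g) ↔
      ω 0 = 0 ∧ (a = 0 → ω 1 = 0) ∧ (b = 0 → ω 2 = 0) := by
  simp only [oddMul_T32, evenMul_T32]
  refine ⟨fun h => ?_, ?_⟩
  · obtain ⟨x, y, h⟩ := h ![1, 0] ![0, 1]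
    have hk (k) := congrFun h k
    refine ⟨?_, ?_, ?_⟩
    · simpa using (hk 0).symm
    · rintro rfl
      simpa using (hk 1).symm
    · rintro rfl
      simpa using (hk 2).symm
  · rintro ⟨h₀, h₁, h₂⟩ f g
    refine ⟨![1, 0, 0], (f 0 * g 1 - f 1 * g 0) • ![ω 1 / a, ω 2 / b, 0], ?_⟩
    have hω₁ : a * (ω 1 / a) = ω 1 := mul_div_cancel_of_imp' h₁
    have hω₂ : b * (ω 2 / b) = ω 2 := mul_div_cancel_of_imp' h₂
    ext k
    fin_cases k
    · simp [h₀]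
    · simp [mul_left_comm a, hω₁]
    · simp [mul_left_comm b, hω₂]

lemma invariant_T32_iff (k : Fin 10) : invariant (T32 a b δ ω) k ↔
    ![a = 0 ∧ b = 0,
      a = 0 ∨ b = 0,
      a = 0 → b = 0,
      δ = 0,
      (a = 0 ∨ δ 1 = 0) ∧ (b = 0 ∨ δ 2 = 0),
      (a = 0 ∨ (δ 0 ≠ 0 ∧ δ 1 = 0 ∧ δ 2 = 0)) ∧
        (b = 0 ∨ (δ 2 = 0 ∧ δ 0 * δ 1 = 0 ∧ (δ 0 ≠ 0 ∨ δ 1 ≠ 0))),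
      ω = 0,
      (a = 0 ∨ ω 0 = 0) ∧ (b = 0 ∨ ω 0 = 0 ∧ ω 1 = 0),
      (a = 0 ∨ ω 0 = 0) ∧ (b = 0 ∨ ω 0 = 0 ∨ ω 1 = 0),
      ω 0 = 0 ∧ (a = 0 → ω 1 = 0) ∧ (b = 0 → ω 2 = 0)] k := by
  fin_cases k
  exacts [T32_evenMul_eq_zero_iff .., T32_evenMul_evenMul_eq_zero_iff ..,
    T32_evenMul_eq_zero_of_sq_eq_zero_iff .., T32_evenAct_eq_zero_iff ..,
    T32_evenAct_evenMul_eq_zero_iff .., T32_sq_eq_zero_of_evenAct_eq_zero_iff ..,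
    T32_oddMul_eq_zero_iff .., T32_evenMul_oddMul_eq_zero_iff .., T32_sq_oddMul_eq_zero_iff ..,
    T32_exists_evenMul_eq_oddMul_iff ..]

/-- The invariants that hold for each of the superalgebras `A32 i`. -/
def signature : Fin 29 → Finset (Fin 10) :=
  ![{0, 1, 2, 3, 4, 5, 6, 7, 8, 9}, {0, 1, 2, 3, 4, 5, 7, 8}, {0, 1, 2, 4, 5, 6, 7, 8, 9},
    {0, 1, 2, 4, 5, 7, 8}, {1, 2, 3, 4, 6, 7, 8, 9}, {1, 2, 3, 4}, {1, 2, 3, 4, 7, 8, 9},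
    {1, 2, 3, 4, 7, 8}, {1, 2, 6, 7, 8, 9}, {1, 2, 4, 6, 7, 8, 9}, {1, 2, 4, 7, 8, 9},
    {1, 2, 4, 5, 6, 7, 8, 9}, {1, 2, 4, 5, 7, 8, 9}, {1, 2, 4, 5, 7, 8}, {1, 3, 4, 6, 7, 8, 9},
    {1, 3, 4, 8}, {1, 3, 4, 7, 8, 9}, {1, 3, 4}, {1, 6, 7, 8, 9}, {1, 4, 5, 6, 7, 8, 9},
    {1, 4, 5, 7, 8, 9}, {1, 4, 6, 7, 8, 9}, {1, 4, 7, 8, 9}, {2, 3, 4, 6, 7, 8, 9},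
    {2, 3, 4, 8, 9}, {2, 3, 4, 7, 8, 9}, {2, 6, 7, 8, 9}, {2, 4, 5, 6, 7, 8, 9},
    {2, 4, 5, 7, 8, 9}]

lemma invariant_A32_iff (i : Fin 29) (k : Fin 10) : invariant (A32 i) k ↔ k ∈ signature i := by
  fin_cases i <;> refine (invariant_T32_iff ..).trans ?_ <;> revert k <;>
    simp +decide [Fin.forall_fin_succ]

lemma signature_injective : Function.Injective signature := by
  decide

lemma eq_of_iso_A32 {i j : Fin 29} (h : Iso (A32 i) (A32 j)) : i = j :=
  signature_injective <| Finset.ext fun k => by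
    rw [← invariant_A32_iff, h.invariant_iff, invariant_A32_iff]

end Invariants

/-- every nilpotent Jordan superalgebra of type (3,2) is isomorphic to
exactly one of the 29 listed superalgebras; in particular these are pairwise
non-isomorphic. -/
theorem stmt2 :
    (∀ μ : Tensor 3 2, IsJordanSuper μ → IsNilpotentT μ → ∃! i : Fin 29, Iso μ (A32 i)) ∧
    (∀ i j : Fin 29, Iso (A32 i) (A32 j) → i = j) := by
  refine ⟨fun μ hJ hN => ?_, fun i j => eq_of_iso_A32⟩
  obtain ⟨i, hi⟩ := hJ.isListed hN
  exact ⟨i, hi, fun j hj => eq_of_iso_A32 (hj.symm.trans hi)⟩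

end
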